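/- arXiv:1801.01735 — 11 statements merged into one kernel-verified Lean document; each statement's English description precedes it below -/
import Mathlib

section
/- Let Γ be a group and ω a normalized 𝕋-valued 3-cocycle on Γ. Define Ψ : Γ × Γ → Map(Γ, 𝕋) by Ψ[s,t](γ) = ω(γ,s,t) · ω(s, s⁻¹γs, t)⁻¹ · ω(s, t, t⁻¹s⁻¹γst). Then Ψ is a normalized equivariant 2-cocycle for the adjoint action of Γ on itself: for all s, t, u, γ ∈ Γ one has Ψ[t,u](s⁻¹γs) · Ψ[st,u](γ)⁻¹ · Ψ[s,tu](γ) · Ψ[s,t](γ)⁻¹ = 1, and Ψ[s,t](γ) = 1 whenever s = e or t = e. -/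
/-- The equivariant 2-cochain on `Γ` (adjoint action) associated to a 3-cocycle `ω`:
`Ψ[s,t](γ) = ω(γ,s,t) · ω(s, s⁻¹γs, t)⁻¹ · ω(s, t, t⁻¹s⁻¹γst)`. -/
noncomputable def adPsi {Γ : Type*} [Group Γ] (ω : Γ → Γ → Γ → Circle) (s t γ : Γ) : Circle :=
  ω γ s t * (ω s (s⁻¹ * γ * s) t)⁻¹ * ω s t (t⁻¹ * s⁻¹ * γ * s * t)

/-- If `ω` is a normalized 𝕋-valued 3-cocycle on `Γ`, then `Ψ` is a normalized equivariant
2-cocycle for the adjoint action of `Γ` on itself. -/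
theorem adPsi_is_normalized_equivariant_two_cocycle
    {Γ : Type*} [Group Γ] (ω : Γ → Γ → Γ → Circle)
    (hcoc : ∀ γ₁ γ₂ γ₃ γ₄ : Γ,
      ω γ₁ γ₂ γ₃ * ω γ₁ (γ₂ * γ₃) γ₄ * ω γ₂ γ₃ γ₄ =
        ω (γ₁ * γ₂) γ₃ γ₄ * ω γ₁ γ₂ (γ₃ * γ₄))
    (hnorm : ∀ γ₁ γ₂ γ₃ : Γ, γ₁ = 1 ∨ γ₂ = 1 ∨ γ₃ = 1 → ω γ₁ γ₂ γ₃ = 1) :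
    (∀ s t u γ : Γ,
      adPsi ω t u (s⁻¹ * γ * s) * (adPsi ω (s * t) u γ)⁻¹ * adPsi ω s (t * u) γ *
        (adPsi ω s t γ)⁻¹ = 1) ∧
    (∀ s t γ : Γ, s = 1 ∨ t = 1 → adPsi ω s t γ = 1) := by
  constructor
  · intro s t u γ
    obtain ⟨y, rfl⟩ : ∃ y, γ = s * t * u * y * u⁻¹ * t⁻¹ * s⁻¹ :=
      ⟨u⁻¹ * t⁻¹ * s⁻¹ * γ * s * t * u, by group⟩
    have h1 := hcoc (s * t * u * y * u⁻¹ * t⁻¹ * s⁻¹) s t u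
    have h2 := hcoc s (t * u * y * u⁻¹ * t⁻¹) t u
    have h3 := hcoc s t (u * y * u⁻¹) u
    have h4 := hcoc s t u y
    simp only [adPsi, mul_inv_rev, mul_assoc, inv_mul_cancel_left, mul_inv_cancel_left,
      inv_mul_cancel, mul_one] at h1 h2 h3 h4 ⊢
    simp only [← ofMul_eq_zero, ofMul_mul, ofMul_inv]
    replace h1 := congrArg Additive.ofMul h1
    replace h2 := congrArg Additive.ofMul h2
    replace h3 := congrArg Additive.ofMul h3
    replace h4 := congrArg Additive.ofMul h4
    simp only [ofMul_mul] at h1 h2 h3 h4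
    linear_combination (norm := skip) h2 - h1 - h3 + h4
    module
  · rintro s t γ (rfl | rfl) <;> simp [adPsi, hnorm]
end

section
/- Let Γ be a group, ω a normalized 𝕋-valued 3-cocycle on Γ, and a ∈ Γ. Define φ_a(s,t) = ω(a,s,t) · ω(s,a,t)⁻¹ · ω(s,t,a) for s, t in the centralizer C_Γ(a) = {γ ∈ Γ : aγ = γa}. Then φ_a is a normalized 𝕋-valued 2-cocycle on the group C_Γ(a): for all s, t, u ∈ C_Γ(a) one has φ_a(t,u) · φ_a(st,u)⁻¹ · φ_a(s,tu) · φ_a(s,t)⁻¹ = 1, and φ_a(s,t) = 1 whenever s = e or t = e. -/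
/-- The 2-cochain on the centralizer of `a` associated to a 3-cocycle `ω`:
`φ_a(s,t) = ω(a,s,t) · ω(s,a,t)⁻¹ · ω(s,t,a)`. -/
noncomputable def phiA {Γ : Type*} [Group Γ] (ω : Γ → Γ → Γ → Circle) (a s t : Γ) : Circle :=
  ω a s t * (ω s a t)⁻¹ * ω s t a

/-- If `ω` is a normalized 𝕋-valued 3-cocycle on `Γ` and `a ∈ Γ`, then `φ_a` is a normalized
𝕋-valued 2-cocycle on the centralizer `C_Γ(a)`. -/
theorem phiA_is_normalized_two_cocycle_on_centralizer
    {Γ : Type*} [Group Γ] (ω : Γ → Γ → Γ → Circle)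
    (hcoc : ∀ γ₁ γ₂ γ₃ γ₄ : Γ,
      ω γ₁ γ₂ γ₃ * ω γ₁ (γ₂ * γ₃) γ₄ * ω γ₂ γ₃ γ₄ =
        ω (γ₁ * γ₂) γ₃ γ₄ * ω γ₁ γ₂ (γ₃ * γ₄))
    (hnorm : ∀ γ₁ γ₂ γ₃ : Γ, γ₁ = 1 ∨ γ₂ = 1 ∨ γ₃ = 1 → ω γ₁ γ₂ γ₃ = 1)
    (a : Γ) :
    (∀ s t u : Γ, a * s = s * a → a * t = t * a → a * u = u * a →
      phiA ω a t u * (phiA ω a (s * t) u)⁻¹ * phiA ω a s (t * u) * (phiA ω a s t)⁻¹ = 1) ∧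
    (∀ s t : Γ, a * s = s * a → a * t = t * a → s = 1 ∨ t = 1 → phiA ω a s t = 1) := by
  constructor
  · intro s t u hs ht hu
    have h1 := congrArg Additive.ofMul (hcoc a s t u)
    have h2 := congrArg Additive.ofMul (hcoc s a t u)
    have h3 := congrArg Additive.ofMul (hcoc s t a u)
    have h4 := congrArg Additive.ofMul (hcoc s t u a)
    rw [hs] at h1
    rw [ht] at h2
    rw [hu] at h3
    apply Additive.ofMul.injective
    simp only [phiA, ofMul_mul, ofMul_inv, ofMul_one] at h1 h2 h3 h4 ⊢
    linear_combination (norm := module) -h1 + h2 - h3 + h4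
  · intro s t _ _ h
    rcases h with h | h <;> simp [phiA, hnorm, h]
end

section
/- Let G be a groupoid and ψ a 𝕋-valued 2-cocycle on G satisfying ψ(g, id_{dom(g)}) = 1 = ψ(id_{codom(g)}, g) for every morphism g. Then there exists a function ξ from the morphisms of G to 𝕋 with ξ(g)² = ψ(g, g⁻¹), ξ(g) = ξ(g⁻¹), and ξ(id_x) = 1 for all objects x; and for any such ξ, the function ψ'(g₁,g₂) = ψ(g₁,g₂) · ξ(g₁g₂) · ξ(g₁)⁻¹ · ξ(g₂)⁻¹ is again a 𝕋-valued 2-cocycle on G and satisfies ψ'(g, g⁻¹) = 1, ψ'(g, id_{dom(g)}) = 1, and ψ'(id_{codom(g)}, g) = 1 for every morphism g. -/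
open CategoryTheory

/-- The twist of a groupoid 2-cochain `ψ` by a 1-cochain `ξ`:
`ψ'(g₁,g₂) = ψ(g₁,g₂) · ξ(g₁g₂) · ξ(g₁)⁻¹ · ξ(g₂)⁻¹` (with `g₁g₂ = g₂ ≫ g₁`). -/
noncomputable def twistedPsi {G : Type*} [Groupoid G]
    (ψ : ∀ x y z : G, (y ⟶ z) → (x ⟶ y) → Circle)
    (ξ : ∀ x y : G, (x ⟶ y) → Circle)
    (x y z : G) (g₁ : y ⟶ z) (g₂ : x ⟶ y) : Circle :=
  ψ x y z g₁ g₂ * ξ x z (g₂ ≫ g₁) * (ξ y z g₁)⁻¹ * (ξ x y g₂)⁻¹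

/-- For a 𝕋-valued 2-cocycle `ψ` on a groupoid `G` with `ψ(g, id_{dom g}) = 1 =
ψ(id_{codom g}, g)`, there is `ξ` with `ξ(g)² = ψ(g,g⁻¹)`, `ξ(g) = ξ(g⁻¹)`, `ξ(id) = 1`;
and for any such `ξ` the twisted cochain `ψ'` is again a 2-cocycle and satisfies
`ψ'(g,g⁻¹) = 1`, `ψ'(g, id_{dom g}) = 1`, `ψ'(id_{codom g}, g) = 1`. -/
theorem groupoid_two_cocycle_strong_normalization
    {G : Type*} [Groupoid G]
    (ψ : ∀ x y z : G, (y ⟶ z) → (x ⟶ y) → Circle)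
    (hcoc : ∀ (w x y z : G) (g₁ : y ⟶ z) (g₂ : x ⟶ y) (g₃ : w ⟶ x),
      ψ w x y g₂ g₃ * (ψ w x z (g₂ ≫ g₁) g₃)⁻¹ * ψ w y z g₁ (g₃ ≫ g₂) *
        (ψ x y z g₁ g₂)⁻¹ = 1)
    (hnorm₁ : ∀ (x y : G) (g : x ⟶ y), ψ x x y g (𝟙 x) = 1)
    (hnorm₂ : ∀ (x y : G) (g : x ⟶ y), ψ x y y (𝟙 y) g = 1) :
    (∃ ξ : ∀ x y : G, (x ⟶ y) → Circle,
      (∀ (x y : G) (g : x ⟶ y), ξ x y g ^ 2 = ψ y x y g (Groupoid.inv g)) ∧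
      (∀ (x y : G) (g : x ⟶ y), ξ x y g = ξ y x (Groupoid.inv g)) ∧
      (∀ x : G, ξ x x (𝟙 x) = 1)) ∧
    (∀ ξ : ∀ x y : G, (x ⟶ y) → Circle,
      (∀ (x y : G) (g : x ⟶ y), ξ x y g ^ 2 = ψ y x y g (Groupoid.inv g)) →
      (∀ (x y : G) (g : x ⟶ y), ξ x y g = ξ y x (Groupoid.inv g)) →
      (∀ x : G, ξ x x (𝟙 x) = 1) →
      ((∀ (w x y z : G) (g₁ : y ⟶ z) (g₂ : x ⟶ y) (g₃ : w ⟶ x),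
          twistedPsi ψ ξ w x y g₂ g₃ * (twistedPsi ψ ξ w x z (g₂ ≫ g₁) g₃)⁻¹ *
            twistedPsi ψ ξ w y z g₁ (g₃ ≫ g₂) * (twistedPsi ψ ξ x y z g₁ g₂)⁻¹ = 1) ∧
        (∀ (x y : G) (g : x ⟶ y), twistedPsi ψ ξ y x y g (Groupoid.inv g) = 1) ∧
        (∀ (x y : G) (g : x ⟶ y), twistedPsi ψ ξ x x y g (𝟙 x) = 1) ∧
        (∀ (x y : G) (g : x ⟶ y), twistedPsi ψ ξ x y y (𝟙 y) g = 1))) := by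
  have hsymm : ∀ (x y : G) (g : x ⟶ y),
      ψ x y x (Groupoid.inv g) g = ψ y x y g (Groupoid.inv g) := by
    intro x y g
    have h := hcoc x y x y g (Groupoid.inv g) g
    simp only [Groupoid.inv_comp, Groupoid.comp_inv, hnorm₁, hnorm₂, inv_one, mul_one] at h
    exact mul_inv_eq_one.mp h
  refine ⟨⟨fun x y g => Circle.exp (Complex.arg (ψ y x y g (Groupoid.inv g) : ℂ) / 2),
    ?_, ?_, ?_⟩, ?_⟩
  · intro x y g
    rw [pow_two, ← Circle.exp_add, add_halves, Circle.exp_arg]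
  · intro x y g
    have hinv : Groupoid.inv (Groupoid.inv g) = g := by
      simp [Groupoid.inv_eq_inv]
    simp only [hinv, hsymm]
  · intro x
    simp [hnorm₂]
  · intro ξ h2 hi h1
    refine ⟨?_, ?_, ?_, ?_⟩
    · intro w x y z g₁ g₂ g₃
      have h := hcoc w x y z g₁ g₂ g₃
      simp only [twistedPsi, Category.assoc]
      rw [← h]
      generalize ξ w z _ = a
      generalize ξ w y _ = b
      generalize ξ x z _ = c
      apply Circle.ext
      push_cast
      field_simp
    · intro x y g
      simp only [twistedPsi, Groupoid.inv_comp, h1, ← hi, ← h2]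
      rw [pow_two]
      simp
    · intro x y g
      simp [twistedPsi, hnorm₁, h1]
    · intro x y g
      simp [twistedPsi, hnorm₂, h1]
end

section
/- Let Γ be a group and ω a normalized 𝕋-valued 3-cocycle on Γ. Then for all s, γ ∈ Γ one has ω(sγ, s⁻¹, s) · ω(s⁻¹, sγ, s⁻¹) = ω(γ, s⁻¹, s) · ω(s⁻¹, sγs⁻¹, s)⁻¹. -/
/-- For a normalized 𝕋-valued 3-cocycle `ω` on a group `Γ`, one has
`ω(sγ, s⁻¹, s) · ω(s⁻¹, sγ, s⁻¹) = ω(γ, s⁻¹, s) · ω(s⁻¹, sγs⁻¹, s)⁻¹` for all `s, γ`. -/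
theorem omega_identity_five
    {Γ : Type*} [Group Γ] (ω : Γ → Γ → Γ → Circle)
    (hcoc : ∀ γ₁ γ₂ γ₃ γ₄ : Γ,
      ω γ₁ γ₂ γ₃ * ω γ₁ (γ₂ * γ₃) γ₄ * ω γ₂ γ₃ γ₄ =
        ω (γ₁ * γ₂) γ₃ γ₄ * ω γ₁ γ₂ (γ₃ * γ₄))
    (hnorm : ∀ γ₁ γ₂ γ₃ : Γ, γ₁ = 1 ∨ γ₂ = 1 ∨ γ₃ = 1 → ω γ₁ γ₂ γ₃ = 1) :
    ∀ s γ : Γ,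
      ω (s * γ) s⁻¹ s * ω s⁻¹ (s * γ) s⁻¹ =
        ω γ s⁻¹ s * (ω s⁻¹ (s * γ * s⁻¹) s)⁻¹ := by
  intro s γ
  have h := hcoc s⁻¹ (s * γ) s⁻¹ s
  rw [inv_mul_cancel_left, inv_mul_cancel, hnorm s⁻¹ (s * γ) 1 (Or.inr (Or.inr rfl)),
    mul_one] at h
  rw [eq_mul_inv_iff_mul_eq, ← h, mul_comm (ω (s * γ) s⁻¹ s), mul_right_comm]
end

section
/- Let Γ be a group and ω a normalized 𝕋-valued 3-cocycle on Γ. Then for all s, γ ∈ Γ one has ω(γ, s⁻¹, s) · ω(s⁻¹, sγs⁻¹, s)⁻¹ · ω(s⁻¹, s, γ) = ω(s⁻¹, s, γ) · ω(s⁻¹, sγ, s⁻¹) · ω(sγs⁻¹, s, s⁻¹) · ω(s⁻¹, s, s⁻¹)⁻¹. (The left-hand side is Ψ[s⁻¹,s](γ) for the associated equivariant 2-cocycle Ψ, and the right-hand side is the inverse of the factor relating the twisted involution ⋆ to # on the tube algebra; this identity is the computational core of the theorem that the tube algebra of the twisted category is the 2-cocycle twist of the original one.) -/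
/-- For a normalized 𝕋-valued 3-cocycle `ω` on a group `Γ`:
`ω(γ,s⁻¹,s) · ω(s⁻¹,sγs⁻¹,s)⁻¹ · ω(s⁻¹,s,γ)
  = ω(s⁻¹,s,γ) · ω(s⁻¹,sγ,s⁻¹) · ω(sγs⁻¹,s,s⁻¹) · ω(s⁻¹,s,s⁻¹)⁻¹`.
The left-hand side is `Ψ[s⁻¹,s](γ)`, the right-hand side the inverse of the factor relating
the twisted involution `⋆` to `#` on the tube algebra. -/
theorem omega_identity_seven
    {Γ : Type*} [Group Γ] (ω : Γ → Γ → Γ → Circle)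
    (hcoc : ∀ γ₁ γ₂ γ₃ γ₄ : Γ,
      ω γ₁ γ₂ γ₃ * ω γ₁ (γ₂ * γ₃) γ₄ * ω γ₂ γ₃ γ₄ =
        ω (γ₁ * γ₂) γ₃ γ₄ * ω γ₁ γ₂ (γ₃ * γ₄))
    (hnorm : ∀ γ₁ γ₂ γ₃ : Γ, γ₁ = 1 ∨ γ₂ = 1 ∨ γ₃ = 1 → ω γ₁ γ₂ γ₃ = 1) :
    ∀ s γ : Γ,
      ω γ s⁻¹ s * (ω s⁻¹ (s * γ * s⁻¹) s)⁻¹ * ω s⁻¹ s γ =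
        ω s⁻¹ s γ * ω s⁻¹ (s * γ) s⁻¹ * ω (s * γ * s⁻¹) s s⁻¹ *
          (ω s⁻¹ s s⁻¹)⁻¹ := by
  intro s γ
  have h1 := hcoc s⁻¹ (s * γ * s⁻¹) s s⁻¹
  have h2 := hcoc γ s⁻¹ s s⁻¹
  have e1 : s * γ * s⁻¹ * s = s * γ := by group
  have e2 : s⁻¹ * (s * γ * s⁻¹) = γ * s⁻¹ := by group
  rw [e1, e2, mul_inv_cancel, hnorm _ _ 1 (by simp), mul_one] at h1
  rw [inv_mul_cancel, mul_inv_cancel, hnorm _ _ 1 (by simp), hnorm _ 1 _ (by simp),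
    mul_one, mul_one] at h2
  have h3 := h2.trans h1.symm
  rw [mul_comm _ (ω s⁻¹ s γ), mul_assoc (ω s⁻¹ s γ), mul_assoc (ω s⁻¹ s γ)]
  congr 1
  generalize ω s⁻¹ (s * γ * s⁻¹) s = b at *
  generalize ω (s * γ * s⁻¹) s s⁻¹ = d at *
  rw [mul_inv_eq_iff_eq_mul, mul_right_comm, eq_mul_inv_iff_mul_eq, h3, mul_assoc, mul_comm]
end

section
/- Let Γ be a group and ω a normalized 𝕋-valued 3-cocycle on Γ. Consider the action groupoid G = Γ ⋉_Ad Γ of the adjoint action: morphisms are pairs g = (s, γ) with dom(g) = γ and codom(g) = sγs⁻¹, and (s₁,γ₁) and (s₂,γ₂) are composable iff γ₁ = s₂γ₂s₂⁻¹, with composite (s₁s₂, γ₂). Define ψ((s₁,γ₁),(s₂,γ₂)) = ω(s₁γ₁s₁⁻¹, s₁, s₂) · ω(s₁, γ₁, s₂)⁻¹ · ω(s₁, s₂, γ₂) for composable pairs. Then ψ is a groupoid 2-cocycle on G: for all s₁, s₂, s₃, γ₃ ∈ Γ, setting γ₂ = s₃γ₃s₃⁻¹ and γ₁ = s₂γ₂s₂⁻¹,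 one has ψ((s₂,γ₂),(s₃,γ₃)) · ψ((s₁s₂,γ₂),(s₃,γ₃))⁻¹ · ψ((s₁,γ₁),(s₂s₃,γ₃)) · ψ((s₁,γ₁),(s₂,γ₂))⁻¹ = 1; moreover ψ(g₁,g₂) = 1 whenever s₁ = e or s₂ = e. -/
/-- The 2-cochain on the action groupoid `Γ ⋉_Ad Γ` associated to a 3-cocycle `ω`:
`ψ((s₁,γ₁),(s₂,γ₂)) = ω(s₁γ₁s₁⁻¹, s₁, s₂) · ω(s₁,γ₁,s₂)⁻¹ · ω(s₁,s₂,γ₂)`. -/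
noncomputable def actPsi {Γ : Type*} [Group Γ] (ω : Γ → Γ → Γ → Circle)
    (s₁ γ₁ s₂ γ₂ : Γ) : Circle :=
  ω (s₁ * γ₁ * s₁⁻¹) s₁ s₂ * (ω s₁ γ₁ s₂)⁻¹ * ω s₁ s₂ γ₂

/-- Combination of four equations `lᵢ = rᵢ` in a commutative group. -/
lemma comb_eq_one {A : Type*} [CommGroup A] {g l₁ r₁ l₂ r₂ l₃ r₃ l₄ r₄ : A}
    (h₁ : l₁ = r₁) (h₂ : l₂ = r₂) (h₃ : l₃ = r₃) (h₄ : l₄ = r₄)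
    (hg : g = (l₁ / r₁)⁻¹ * (l₂ / r₂) * (l₃ / r₃)⁻¹ * (l₄ / r₄)) : g = 1 := by
  subst h₁ h₂ h₃ h₄
  simpa using hg

/-- If `ω` is a normalized 𝕋-valued 3-cocycle on `Γ`, then `ψ` is a 2-cocycle on the action
groupoid `Γ ⋉_Ad Γ` of the adjoint action (morphisms `(s,γ) : γ ⟶ sγs⁻¹`, composition
`(s₁,γ₁)(s₂,γ₂) = (s₁s₂,γ₂)` when `γ₁ = s₂γ₂s₂⁻¹`), normalized in the sense that
`ψ(g₁,g₂) = 1` whenever `s₁ = e` or `s₂ = e`. -/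
theorem actPsi_is_groupoid_two_cocycle
    {Γ : Type*} [Group Γ] (ω : Γ → Γ → Γ → Circle)
    (hcoc : ∀ γ₁ γ₂ γ₃ γ₄ : Γ,
      ω γ₁ γ₂ γ₃ * ω γ₁ (γ₂ * γ₃) γ₄ * ω γ₂ γ₃ γ₄ =
        ω (γ₁ * γ₂) γ₃ γ₄ * ω γ₁ γ₂ (γ₃ * γ₄))
    (hnorm : ∀ γ₁ γ₂ γ₃ : Γ, γ₁ = 1 ∨ γ₂ = 1 ∨ γ₃ = 1 → ω γ₁ γ₂ γ₃ = 1) :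
    (∀ s₁ s₂ s₃ γ₃ γ₂ γ₁ : Γ, γ₂ = s₃ * γ₃ * s₃⁻¹ → γ₁ = s₂ * γ₂ * s₂⁻¹ →
      actPsi ω s₂ γ₂ s₃ γ₃ * (actPsi ω (s₁ * s₂) γ₂ s₃ γ₃)⁻¹ *
        actPsi ω s₁ γ₁ (s₂ * s₃) γ₃ * (actPsi ω s₁ γ₁ s₂ γ₂)⁻¹ = 1) ∧
    (∀ s₁ γ₁ s₂ γ₂ : Γ, γ₁ = s₂ * γ₂ * s₂⁻¹ → s₁ = 1 ∨ s₂ = 1 →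
      actPsi ω s₁ γ₁ s₂ γ₂ = 1) := by
  constructor
  · intro s₁ s₂ s₃ γ₃ γ₂ γ₁ h2 h1
    have e3 : γ₂ * s₃ = s₃ * γ₃ := by rw [h2]; group
    have e2 : γ₁ * s₂ = s₂ * γ₂ := by rw [h1]; group
    have d2 : s₂ * γ₂ * s₂⁻¹ = γ₁ := h1.symm
    have d1 : s₁ * s₂ * γ₂ * (s₁ * s₂)⁻¹ = s₁ * γ₁ * s₁⁻¹ := by rw [h1]; group
    have e1 : s₁ * γ₁ * s₁⁻¹ * s₁ = s₁ * γ₁ := by group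
    have c1 := hcoc (s₁ * γ₁ * s₁⁻¹) s₁ s₂ s₃
    have c2 := hcoc s₁ γ₁ s₂ s₃
    have c3 := hcoc s₁ s₂ γ₂ s₃
    have c4 := hcoc s₁ s₂ s₃ γ₃
    rw [e1] at c1
    rw [e2] at c2
    rw [e3] at c3
    unfold actPsi
    rw [d2, d1]
    refine comb_eq_one c1 c2 c3 c4 ?_
    generalize s₁ * γ₁ * s₁⁻¹ = γ₀
    apply Additive.ofMul.injective
    simp only [ofMul_mul, ofMul_inv, ofMul_div]
    abel
  · intro s₁ γ₁ s₂ γ₂ h hs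
    unfold actPsi
    rcases hs with rfl | rfl
    · simp [hnorm]
    · simp [hnorm]
end

section
/- Let n ≥ 1 and 0 ≤ k < n be integers. The map ω^k : (ℤ/nℤ)³ → 𝕋 defined by ω^k(a,b,c) = exp(2π√−1 · k · c(a,b) · r(c) / n), where c(a,b) = ⌊(r(a)+r(b))/n⌋ is the carry function, is a normalized 𝕋-valued 3-cocycle on the group ℤ/nℤ: for all a,b,c,d ∈ ℤ/nℤ one has ω^k(a,b,c)·ω^k(a,b+c,d)·ω^k(b,c,d) = ω^k(a+b,c,d)·ω^k(a,b,c+d), and ω^k(a,b,c) = 1 whenever one of a, b, c is 0. -/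
/-- The 3-cochain `ω^k` on `ℤ/nℤ`:
`ω^k(a,b,c) = exp(2π√−1 · k · ⌊(r(a)+r(b))/n⌋ · r(c) / n)`. -/
noncomputable def omegaK (n k : ℕ) (a b c : ZMod n) : Circle :=
  Circle.exp (2 * Real.pi * (k : ℝ) * (((a.val + b.val) / n : ℕ) : ℝ) * (c.val : ℝ) / (n : ℝ))

/-- Carry identity: `r(a) + r(b) = r(a+b) + n * c(a,b)`. -/
lemma carry_identity (n : ℕ) (hn : 1 ≤ n) (a b : ZMod n) :
    a.val + b.val = (a + b).val + n * ((a.val + b.val) / n) := by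
  haveI : NeZero n := ⟨by omega⟩
  rw [ZMod.val_add]
  exact (Nat.mod_add_div _ _).symm

/-- For `n ≥ 1` and `0 ≤ k < n`, `ω^k` is a normalized 𝕋-valued 3-cocycle on `ℤ/nℤ`. -/
theorem omegaK_is_normalized_three_cocycle (n k : ℕ) (hn : 1 ≤ n) (hk : k < n) :
    (∀ a b c d : ZMod n,
      omegaK n k a b c * omegaK n k a (b + c) d * omegaK n k b c d =
        omegaK n k (a + b) c d * omegaK n k a b (c + d)) ∧
    (∀ a b c : ZMod n, a = 0 ∨ b = 0 ∨ c = 0 → omegaK n k a b c = 1) := by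
  haveI : NeZero n := ⟨by omega⟩
  have hn0 : (n : ℝ) ≠ 0 := by exact_mod_cast (by omega : n ≠ 0)
  refine ⟨fun a b c d => ?_, fun a b c h => ?_⟩
  · have h1 := carry_identity n hn a b
    have h2 := carry_identity n hn (a + b) c
    have h3 := carry_identity n hn b c
    have h4 := carry_identity n hn a (b + c)
    have h5 := carry_identity n hn c d
    rw [← add_assoc] at h4
    unfold omegaK
    simp only [← Circle.exp_add]
    generalize (a.val + b.val) / n = p at *
    generalize ((a + b).val + c.val) / n = q at *
    generalize (b.val + c.val) / n = r at *
    generalize (a.val + (b + c).val) / n = s at *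
    generalize (c.val + d.val) / n = t at *
    have hs : s + r = q + p := by
      apply Nat.eq_of_mul_eq_mul_left (by omega : 0 < n)
      rw [mul_add, mul_add]
      omega
    have hs' : (s : ℝ) = q + p - r := by
      have : (s : ℝ) + r = q + p := by exact_mod_cast hs
      linarith
    have h5' : (c.val : ℝ) = (c + d).val + n * t - d.val := by
      have : (c.val : ℝ) + d.val = (c + d).val + n * t := by exact_mod_cast h5
      linarith
    rw [Circle.exp_eq_exp]
    refine ⟨((k * p * t : ℕ) : ℤ), ?_⟩
    rw [hs', h5']
    push_cast
    field_simp
    ring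
  · unfold omegaK
    have hz : ((a.val + b.val) / n) * c.val = 0 := by
      rcases h with rfl | rfl | rfl
      · simp [Nat.div_eq_of_lt (ZMod.val_lt b)]
      · simp [Nat.div_eq_of_lt (ZMod.val_lt a)]
      · simp
    have hz' : (((a.val + b.val) / n : ℕ) : ℝ) * (c.val : ℝ) = 0 := by exact_mod_cast hz
    rw [mul_assoc, hz']
    simp
end

section
/- Let n ≥ 1 and 0 ≤ k < n be integers, and let ω^k(a,b,c) = exp(2π√−1 · k · c(a,b) · r(c)/n) on ℤ/nℤ. For a, s ∈ ℤ/nℤ put ζ(s,a) = exp(−2π√−1 · k · r(s)·r(a)/n²). Then for all a, s, t ∈ ℤ/nℤ one has ω^k(a,s,t) · ζ(s,a) · ω^k(s,a,t)⁻¹ · ζ(t,a) · ω^k(s,t,a) = ζ(s+t,a). (This is the identity verifying that the rescaled family c̃_Y = ζ(s,a)·c_Y defines a half braiding for the ω^k-twisted category.) -/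
/-- `ζ(s,a) = exp(−2π√−1 · k · r(s)·r(a)/n²)`. -/
noncomputable def zetaK (n k : ℕ) (s a : ZMod n) : Circle :=
  Circle.exp (-(2 * Real.pi * (k : ℝ) * (s.val : ℝ) * (a.val : ℝ)) / ((n : ℝ) ^ 2))

/-- For `n ≥ 1`, `0 ≤ k < n`:
`ω^k(a,s,t) · ζ(s,a) · ω^k(s,a,t)⁻¹ · ζ(t,a) · ω^k(s,t,a) = ζ(s+t,a)`,
the identity verifying that `c̃_Y = ζ(s,a)·c_Y` defines a half braiding for the twisted
category. -/
theorem zetaK_half_braiding_identity (n k : ℕ) (hn : 1 ≤ n) (hk : k < n) :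
    ∀ a s t : ZMod n,
      omegaK n k a s t * zetaK n k s a * (omegaK n k s a t)⁻¹ * zetaK n k t a *
        omegaK n k s t a = zetaK n k (s + t) a := by
  intro a s t
  haveI : NeZero n := ⟨by omega⟩
  have hn0 : (n : ℝ) ≠ 0 := by
    have : n ≠ 0 := by omega
    exact_mod_cast this
  have hst : ((s + t).val : ℝ) =
      (s.val : ℝ) + t.val - n * (((s.val + t.val) / n : ℕ) : ℝ) := by
    have h := Nat.mod_add_div (s.val + t.val) n
    rw [← ZMod.val_add] at h
    have h2 : ((s + t).val : ℝ) + n * (((s.val + t.val) / n : ℕ) : ℝ) = s.val + t.val := by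
      exact_mod_cast h
    linarith
  have hcomm : omegaK n k a s t = omegaK n k s a t := by
    unfold omegaK
    rw [add_comm a.val s.val]
  rw [hcomm, mul_comm (omegaK n k s a t), mul_inv_cancel_right]
  unfold omegaK zetaK
  rw [← Circle.exp_add, ← Circle.exp_add, hst]
  congr 1
  field_simp
  ring
end

section
/- Let n₁, n₂ ≥ 1 be integers and Γ = (ℤ/n₁ℤ) × (ℤ/n₂ℤ). The map φ₁₂(a,b,c) = exp(2π√−1 · c₁(a₁,b₁) · r(c₂)/n₂), where c₁ is the carry function on ℤ/n₁ℤ and r(c₂) is the canonical representative of the second component of c, is a normalized 𝕋-valued 3-cocycle on Γ: for all a,b,c,d ∈ Γ one has φ₁₂(a,b,c)·φ₁₂(a,b+c,d)·φ₁₂(b,c,d) = φ₁₂(a+b,c,d)·φ₁₂(a,b,c+d), and φ₁₂(a,b,c) = 1 whenever one of a, b, c is 0. -/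
/-- The 3-cochain `φ₁₂` on `(ℤ/n₁ℤ) × (ℤ/n₂ℤ)`:
`φ₁₂(a,b,c) = exp(2π√−1 · ⌊(r(a₁)+r(b₁))/n₁⌋ · r(c₂)/n₂)`. -/
noncomputable def phi12 (n₁ n₂ : ℕ) (a b c : ZMod n₁ × ZMod n₂) : Circle :=
  Circle.exp
    (2 * Real.pi * (((a.1.val + b.1.val) / n₁ : ℕ) : ℝ) * (c.2.val : ℝ) / (n₂ : ℝ))

theorem carry_cocycle (n x y z : ℕ) (hn : 1 ≤ n) :
    (x + (y + z) % n) / n + (y + z) / n = ((x + y) % n + z) / n + (x + y) / n := by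
  have h1 : (x + (y + z) % n) / n + (y + z) / n = (x + y + z) / n := by
    rw [← Nat.add_mul_div_left _ _ hn]
    congr 1
    have := Nat.mod_add_div (y + z) n
    omega
  have h2 : ((x + y) % n + z) / n + (x + y) / n = (x + y + z) / n := by
    rw [← Nat.add_mul_div_left _ _ hn]
    congr 1
    have := Nat.mod_add_div (x + y) n
    omega
  rw [h1, h2]

/-- For `n₁, n₂ ≥ 1`, `φ₁₂` is a normalized 𝕋-valued 3-cocycle on
`(ℤ/n₁ℤ) × (ℤ/n₂ℤ)`. -/
theorem phi12_is_normalized_three_cocycle (n₁ n₂ : ℕ) (hn₁ : 1 ≤ n₁) (hn₂ : 1 ≤ n₂) :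
    (∀ a b c d : ZMod n₁ × ZMod n₂,
      phi12 n₁ n₂ a b c * phi12 n₁ n₂ a (b + c) d * phi12 n₁ n₂ b c d =
        phi12 n₁ n₂ (a + b) c d * phi12 n₁ n₂ a b (c + d)) ∧
    (∀ a b c : ZMod n₁ × ZMod n₂, a = 0 ∨ b = 0 ∨ c = 0 → phi12 n₁ n₂ a b c = 1) := by
  haveI : NeZero n₁ := ⟨by omega⟩
  haveI : NeZero n₂ := ⟨by omega⟩
  refine ⟨?_, ?_⟩
  · intro a b c d
    simp only [phi12, Prod.fst_add, Prod.snd_add, ← Circle.exp_add]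
    rw [ZMod.val_add a.1 b.1, ZMod.val_add b.1 c.1, ZMod.val_add c.2 d.2]
    have h1 := carry_cocycle n₁ a.1.val b.1.val c.1.val hn₁
    have h2 := Nat.mod_add_div (c.2.val + d.2.val) n₂
    generalize (a.1.val + (b.1.val + c.1.val) % n₁) / n₁ = k1 at *
    generalize (b.1.val + c.1.val) / n₁ = k2 at *
    generalize ((a.1.val + b.1.val) % n₁ + c.1.val) / n₁ = k3 at *
    generalize (a.1.val + b.1.val) / n₁ = k4 at *
    generalize (c.2.val + d.2.val) % n₂ = m at *
    generalize (c.2.val + d.2.val) / n₂ = q at *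
    have h1' : (k1 : ℝ) = k3 + k4 - k2 := by
      rw [eq_sub_iff_add_eq]; exact_mod_cast h1
    have h2' : (m : ℝ) = c.2.val + d.2.val - n₂ * q := by
      rw [eq_sub_iff_add_eq]; exact_mod_cast h2
    have hn : (n₂ : ℝ) ≠ 0 := by exact_mod_cast (by omega : n₂ ≠ 0)
    rw [Circle.exp_eq_exp]
    refine ⟨(k4 * q : ℕ), ?_⟩
    rw [h1', h2']
    push_cast
    field_simp
    ring
  · rintro a b c (rfl | rfl | rfl)
    · simp [phi12, Nat.div_eq_of_lt (ZMod.val_lt b.1)]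
    · simp [phi12, Nat.div_eq_of_lt (ZMod.val_lt a.1)]
    · simp [phi12]
end

section
/- Let n₁, n₂, n₃ ≥ 1 be integers, d = gcd(n₁, n₂, n₃), and Γ = (ℤ/n₁ℤ) × (ℤ/n₂ℤ) × (ℤ/n₃ℤ). The map φ₁₂₃(a,b,c) = exp(2π√−1 · r(a₁)·r(b₂)·r(c₃)/d) is a normalized 𝕋-valued 3-cocycle on Γ: for all a,b,c,x ∈ Γ one has φ₁₂₃(a,b,c)·φ₁₂₃(a,b+c,x)·φ₁₂₃(b,c,x) = φ₁₂₃(a+b,c,x)·φ₁₂₃(a,b,c+x), and φ₁₂₃(a,b,c) = 1 whenever one of a, b, c is 0. -/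
/-- The 3-cochain `φ₁₂₃` on `(ℤ/n₁ℤ) × (ℤ/n₂ℤ) × (ℤ/n₃ℤ)`:
`φ₁₂₃(a,b,c) = exp(2π√−1 · r(a₁)·r(b₂)·r(c₃)/gcd(n₁,n₂,n₃))`. -/
noncomputable def phi123 (n₁ n₂ n₃ : ℕ) (a b c : ZMod n₁ × ZMod n₂ × ZMod n₃) : Circle :=
  Circle.exp
    (2 * Real.pi * (a.1.val : ℝ) * (b.2.1.val : ℝ) * (c.2.2.val : ℝ) /
      ((Nat.gcd n₁ (Nat.gcd n₂ n₃) : ℕ) : ℝ))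

theorem phi123_aux_val (n d : ℕ) (hn : 1 ≤ n) (hd : d ∣ n) (u v : ZMod n) :
    ∃ k : ℤ, ((u + v).val : ℝ) = (u.val : ℝ) + (v.val : ℝ) + (d : ℝ) * (k : ℝ) := by
  haveI : NeZero n := ⟨by omega⟩
  obtain ⟨m, rfl⟩ := hd
  refine ⟨-((m * ((u.val + v.val) / (d * m)) : ℕ) : ℤ), ?_⟩
  have h := Nat.mod_add_div (u.val + v.val) (d * m)
  rw [← ZMod.val_add] at h
  have h2 : (((u + v).val + d * m * ((u.val + v.val) / (d * m)) : ℕ) : ℝ)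
      = ((u.val + v.val : ℕ) : ℝ) := congrArg Nat.cast h
  generalize (u.val + v.val) / (d * m) = q at h2 ⊢
  push_cast at h2 ⊢
  linarith

/-- For `n₁, n₂, n₃ ≥ 1`, `φ₁₂₃` is a normalized 𝕋-valued 3-cocycle on
`(ℤ/n₁ℤ) × (ℤ/n₂ℤ) × (ℤ/n₃ℤ)`. -/
theorem phi123_is_normalized_three_cocycle (n₁ n₂ n₃ : ℕ)
    (hn₁ : 1 ≤ n₁) (hn₂ : 1 ≤ n₂) (hn₃ : 1 ≤ n₃) :
    (∀ a b c x : ZMod n₁ × ZMod n₂ × ZMod n₃,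
      phi123 n₁ n₂ n₃ a b c * phi123 n₁ n₂ n₃ a (b + c) x * phi123 n₁ n₂ n₃ b c x =
        phi123 n₁ n₂ n₃ (a + b) c x * phi123 n₁ n₂ n₃ a b (c + x)) ∧
    (∀ a b c : ZMod n₁ × ZMod n₂ × ZMod n₃, a = 0 ∨ b = 0 ∨ c = 0 →
      phi123 n₁ n₂ n₃ a b c = 1) := by
  have hd₁ : Nat.gcd n₁ (Nat.gcd n₂ n₃) ∣ n₁ := Nat.gcd_dvd_left _ _
  have hd₂ : Nat.gcd n₁ (Nat.gcd n₂ n₃) ∣ n₂ :=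
    (Nat.gcd_dvd_right _ _).trans (Nat.gcd_dvd_left _ _)
  have hd₃ : Nat.gcd n₁ (Nat.gcd n₂ n₃) ∣ n₃ :=
    (Nat.gcd_dvd_right _ _).trans (Nat.gcd_dvd_right _ _)
  have hd0 : ((Nat.gcd n₁ (Nat.gcd n₂ n₃) : ℕ) : ℝ) ≠ 0 := by
    have := Nat.gcd_pos_of_pos_left (Nat.gcd n₂ n₃) hn₁
    exact_mod_cast this.ne'
  refine ⟨?_, ?_⟩
  · intro a b c x
    obtain ⟨k₁, h₁⟩ := phi123_aux_val n₁ _ hn₁ hd₁ a.1 b.1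
    obtain ⟨k₂, h₂⟩ := phi123_aux_val n₂ _ hn₂ hd₂ b.2.1 c.2.1
    obtain ⟨k₃, h₃⟩ := phi123_aux_val n₃ _ hn₃ hd₃ c.2.2 x.2.2
    simp only [phi123, Prod.fst_add, Prod.snd_add, ← Circle.exp_add]
    rw [h₁, h₂, h₃, Circle.exp_eq_exp]
    refine ⟨a.1.val * k₂ * x.2.2.val - k₁ * c.2.1.val * x.2.2.val
      - a.1.val * b.2.1.val * k₃, ?_⟩
    generalize ((Nat.gcd n₁ (Nat.gcd n₂ n₃) : ℕ) : ℝ) = d at hd0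
    push_cast
    field_simp
    ring
  · rintro a b c (rfl | rfl | rfl) <;> simp [phi123]
end

section
/- Let Γ = (ℤ/2ℤ)³, let ω = φ₁₂₃ be the normalized 3-cocycle ω(a,b,c) = (−1)^{r(a₁)·r(b₂)·r(c₃)}, and let a = (0,0,1) ∈ Γ. Then the associated 2-cocycle φ_a(s,t) = ω(a,s,t)·ω(s,a,t)⁻¹·ω(s,t,a) is given by φ_a(s,t) = (−1)^{r(s₁)·r(t₂)}, it is a normalized 𝕋-valued 2-cocycle on Γ, and it is not a coboundary: there is no function ξ : Γ → 𝕋 such that φ_a(s,t) = ξ(t)·ξ(s+t)⁻¹·ξ(s) for all s, t ∈ Γ (indeed φ_a((1,0,0),(0,1,0)) = −1 ≠ 1 = φ_a((0,1,0),(1,0,0)), while every coboundary on a commutative group is symmetric). -/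
/-- `−1` as an element of the circle group 𝕋. -/
noncomputable def circleNegOne : Circle :=
  ⟨-1, by simp [Submonoid.unitSphere, mem_sphere_zero_iff_norm]⟩

/-- The 3-cocycle `ω = φ₁₂₃` on `(ℤ/2ℤ)³`: `ω(a,b,c) = (−1)^{r(a₁)·r(b₂)·r(c₃)}`. -/
noncomputable def omega123 (a b c : ZMod 2 × ZMod 2 × ZMod 2) : Circle :=
  circleNegOne ^ (a.1.val * b.2.1.val * c.2.2.val)

/-- The associated 2-cocycle `φ_a(s,t) = ω(a,s,t)·ω(s,a,t)⁻¹·ω(s,t,a)` for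
`a = (0,0,1)`. -/
noncomputable def phiA123 (s t : ZMod 2 × ZMod 2 × ZMod 2) : Circle :=
  omega123 (0, 0, 1) s t * (omega123 s (0, 0, 1) t)⁻¹ * omega123 s t (0, 0, 1)

theorem circleNegOne_sq : circleNegOne ^ 2 = 1 := by
  ext
  have h : ((circleNegOne : Circle) : ℂ) = -1 := rfl
  rw [Circle.coe_pow, h, Circle.coe_one]
  norm_num

theorem circleNegOne_ne_one : circleNegOne ≠ 1 := by
  intro h
  have h' : ((circleNegOne : Circle) : ℂ) = ((1 : Circle) : ℂ) := by rw [h]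
  have h2 : (-1 : ℂ) = 1 := by simpa [circleNegOne] using h'
  norm_num at h2

theorem circleNegOne_inv : circleNegOne⁻¹ = circleNegOne := by
  rw [inv_eq_iff_mul_eq_one, ← pow_two, circleNegOne_sq]

theorem circleNegOne_pow_even {n : ℕ} (h : n % 2 = 0) : circleNegOne ^ n = 1 := by
  obtain ⟨k, rfl⟩ := Nat.dvd_of_mod_eq_zero h
  rw [pow_mul, circleNegOne_sq, one_pow]

theorem phiA123_eq (s t : ZMod 2 × ZMod 2 × ZMod 2) :
    phiA123 s t = circleNegOne ^ (s.1.val * t.2.1.val) := by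
  simp [phiA123, omega123, ZMod.val_one]

theorem cocycle_exponent_even : ∀ s₁ t₁ t₂ u₂ : ZMod 2,
    (t₁.val * u₂.val + (s₁ + t₁).val * u₂.val + s₁.val * (t₂ + u₂).val
      + s₁.val * t₂.val) % 2 = 0 := by
  decide

/-- For `Γ = (ℤ/2ℤ)³`, `ω = φ₁₂₃` and `a = (0,0,1)`: the associated 2-cocycle `φ_a` is
given by `φ_a(s,t) = (−1)^{r(s₁)·r(t₂)}`, it is a normalized 𝕋-valued 2-cocycle on `Γ`,
and it is not a coboundary. -/
theorem phiA123_formula_cocycle_not_coboundary :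
    (∀ s t : ZMod 2 × ZMod 2 × ZMod 2,
      phiA123 s t = circleNegOne ^ (s.1.val * t.2.1.val)) ∧
    (∀ s t u : ZMod 2 × ZMod 2 × ZMod 2,
      phiA123 t u * (phiA123 (s + t) u)⁻¹ * phiA123 s (t + u) * (phiA123 s t)⁻¹ = 1) ∧
    (∀ s t : ZMod 2 × ZMod 2 × ZMod 2, s = 0 ∨ t = 0 → phiA123 s t = 1) ∧
    ¬ ∃ ξ : ZMod 2 × ZMod 2 × ZMod 2 → Circle,
        ∀ s t : ZMod 2 × ZMod 2 × ZMod 2,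
          phiA123 s t = ξ t * (ξ (s + t))⁻¹ * ξ s := by
  refine ⟨phiA123_eq, ?_, ?_, ?_⟩
  · intro s t u
    simp only [phiA123_eq, ← inv_pow, circleNegOne_inv, ← pow_add]
    exact circleNegOne_pow_even (cocycle_exponent_even s.1 t.1 t.2.1 u.2.1)
  · rintro s t (rfl | rfl) <;> simp [phiA123_eq]
  · rintro ⟨ξ, h⟩
    have h1 := h (1, 0, 0) (0, 1, 0)
    have h2 := h (0, 1, 0) (1, 0, 0)
    rw [add_comm, mul_right_comm, mul_comm (ξ _), mul_right_comm, ← h2] at h1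
    simp [phiA123_eq, ZMod.val_one] at h1
    exact circleNegOne_ne_one h1
end
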